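/- The logarithmic derivative of the Gauss curvature satisfies K_{/k}/K = b^{ij} ∇^I_i b_{kj} for k = 1, 2, where ∇^I_i b_{kj} = b_{kj/i} − Γ_{ik}^m b_{mj} − Γ_{ij}^m b_{km} is the covariant derivative of the second fundamental tensor with respect to the Christoffel symbols Γ_{ij}^k = (1/2) g^{km}(−g_{ij/m} + g_{im/j} + g_{jm/i}) of the first fundamental form, and (b^{ij}) is the inverse of (b_{ij}). -/

import Mathlib

open Matrix

noncomputable section

/-- The parameter domain `ℝ²`. -/
abbrev Param : Type := Fin 2 → ℝ

/-- Vectors in Euclidean 3-space. -/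
abbrev Vec3 : Type := Fin 3 → ℝ

/-- Partial derivative of a vector-valued function in the `i`-th coordinate direction. -/
noncomputable def pd (i : Fin 2) (f : Param → Vec3) (u : Param) : Vec3 :=
  fderiv ℝ f u (Pi.single i 1)

/-- Partial derivative of a scalar function in the `i`-th coordinate direction. -/
noncomputable def pds (i : Fin 2) (f : Param → ℝ) (u : Param) : ℝ :=
  fderiv ℝ f u (Pi.single i 1)

/-- The Euclidean inner product on `ℝ³`. -/
def dot3 (a b : Vec3) : ℝ := ∑ k, a k * b k

/-- The Euclidean norm on `ℝ³`. -/
noncomputable def norm3 (a : Vec3) : ℝ := Real.sqrt (dot3 a a)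

/-- The Gauss map `n = (x_{/1} × x_{/2}) / ‖x_{/1} × x_{/2}‖`. -/
noncomputable def gaussMap (x : Param → Vec3) (u : Param) : Vec3 :=
  (norm3 (crossProduct (pd 0 x u) (pd 1 x u)))⁻¹ • crossProduct (pd 0 x u) (pd 1 x u)

/-- Components `g_{ij}` of the first fundamental form. -/
noncomputable def fformI (x : Param → Vec3) (u : Param) : Matrix (Fin 2) (Fin 2) ℝ :=
  Matrix.of fun i j => dot3 (pd i x u) (pd j x u)

/-- Components `b_{ij} = ⟨∂²x/∂u^i∂u^j, n⟩` of the second fundamental form. -/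
noncomputable def fformII (x : Param → Vec3) (u : Param) : Matrix (Fin 2) (Fin 2) ℝ :=
  Matrix.of fun i j => dot3 (pd i (pd j x) u) (gaussMap x u)

/-- Components `e_{ij} = ⟨n_{/i}, n_{/j}⟩` of the third fundamental form. -/
noncomputable def fformIII (x : Param → Vec3) (u : Param) : Matrix (Fin 2) (Fin 2) ℝ :=
  Matrix.of fun i j => dot3 (pd i (gaussMap x) u) (pd j (gaussMap x) u)

/-- The Gauss curvature `K = det(b_{ij}) / det(g_{ij})`. -/
noncomputable def gaussCurv (x : Param → Vec3) (u : Param) : ℝ :=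
  (fformII x u).det / (fformI x u).det

/-- The mean curvature `H = (1/2) g^{ij} b_{ij}`. -/
noncomputable def meanCurv (x : Param → Vec3) (u : Param) : ℝ :=
  (1 / 2) * ∑ i, ∑ j, (fformI x u)⁻¹ i j * fformII x u i j

/-- First Beltrami operator `∇^J(φ, ψ) = a^{ij} φ_{/i} ψ_{/j}` with respect to the
fundamental form with component matrix `a`, for scalar `φ` and `ℝ³`-valued `ψ`. -/
noncomputable def beltrami1 (a : Param → Matrix (Fin 2) (Fin 2) ℝ)
    (φ : Param → ℝ) (ψ : Param → Vec3) (u : Param) : Vec3 :=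
  ∑ i, ∑ j, ((a u)⁻¹ i j * pds i φ u) • pd j ψ u

/-- Second Beltrami operator
`Δ^J f = −(1/√|det a|) ∂_i (√|det a| a^{ij} ∂_j f)` with respect to the fundamental
form with component matrix `a`, acting componentwise on `ℝ³`-valued functions. -/
noncomputable def beltrami2 (a : Param → Matrix (Fin 2) (Fin 2) ℝ)
    (f : Param → Vec3) (u : Param) : Vec3 :=
  -((Real.sqrt |(a u).det|)⁻¹ •
    ∑ i, ∑ j, pd i (fun v => (Real.sqrt |(a v).det| * (a v)⁻¹ i j) • pd j f v) u)

/-- `x` is an immersion on `U`: the partial derivatives are linearly independent. -/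
def Immersed (x : Param → Vec3) (U : Set Param) : Prop :=
  ∀ u ∈ U, LinearIndependent ℝ ![pd 0 x u, pd 1 x u]

/-- `f` is nonconstant on `U`. -/
def NonconstOn (f : Param → Vec3) (U : Set Param) : Prop :=
  ¬ ∃ v : Vec3, ∀ u ∈ U, f u = v

/-- Christoffel symbols `Γ_{ij}^k = (1/2) g^{km}(−g_{ij/m} + g_{im/j} + g_{jm/i})`
of the first fundamental form. -/
noncomputable def christoffelI (x : Param → Vec3) (u : Param) (i j k : Fin 2) : ℝ :=
  (1 / 2) * ∑ m, (fformI x u)⁻¹ k m *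
    (-(pds m (fun v => fformI x v i j) u) + pds j (fun v => fformI x v i m) u +
      pds i (fun v => fformI x v j m) u)

/-- Covariant derivative `∇^I_i b_{kj} = b_{kj/i} − Γ_{ik}^m b_{mj} − Γ_{ij}^m b_{km}`
of the second fundamental tensor with respect to the first fundamental form. -/
noncomputable def covDerivII (x : Param → Vec3) (i k j : Fin 2) (u : Param) : ℝ :=
  pds i (fun v => fformII x v k j) u
    - ∑ m, christoffelI x u i k m * fformII x u m j
    - ∑ m, christoffelI x u i j m * fformII x u k m

/-!
Writing `Γ_k` for the matrix `(Γ_{ki}^m)_{im}`, metric compatibility reads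
`∂_k g = Γ_k g + g Γ_kᵀ`, while by definition `∇_k b = ∂_k b - Γ_k b - b Γ_kᵀ`. Hence
`tr (g⁻¹ ∂_k g) = 2 tr Γ_k` and `tr (b⁻¹ ∇_k b) = tr (b⁻¹ ∂_k b) - 2 tr Γ_k`, so that Jacobi's
formula turns `tr (b⁻¹ ∇_k b)` into the logarithmic derivative of `det b / det g = K`. The Codazzi
equation `∇_i b_{kj} = ∇_k b_{ij}` exchanges the derivative index with `k`; it holds because the
Gauss and Weingarten formulas make `∇_i b_{kj}` the sum of `⟨x_{/ikj}, n⟩` and three Christoffel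
terms that `i ↔ k` permutes.
-/

section LinearAlgebra

variable {n R : Type*} [Fintype n] [DecidableEq n] [CommRing R]

lemma trace_inv_mul_mul_add_mul_transpose {A : Matrix n n R} (hA : IsUnit A.det)
    (G : Matrix n n R) : trace (A⁻¹ * (G * A + A * Gᵀ)) = 2 * trace G := by
  rw [mul_add, trace_add, ← Matrix.mul_assoc, trace_mul_cycle, mul_nonsing_inv A hA, one_mul,
    nonsing_inv_mul_cancel_left A _ hA, trace_transpose, two_mul]

lemma sum_sum_inv_mul_eq_trace {A : Matrix n n R} (hA : A.IsSymm) (C : Matrix n n R) :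
    ∑ i, ∑ j, A⁻¹ i j * C i j = trace (A⁻¹ * C) := by
  simp only [trace, diag_apply, mul_apply]
  rw [Finset.sum_comm]
  refine Finset.sum_congr rfl fun j _ => Finset.sum_congr rfl fun i _ => ?_
  rw [hA.inv.apply j i]

end LinearAlgebra

lemma eq_zero_of_orthogonal_cross {R : Type*} [CommRing R] [LinearOrder R] [IsStrictOrderedRing R]
    {a b w : Fin 3 → R} (hab : a ⨯₃ b ≠ 0) (ha : w ⬝ᵥ a = 0) (hb : w ⬝ᵥ b = 0)
    (hn : w ⬝ᵥ a ⨯₃ b = 0) : w = 0 := by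
  have hcross : w ⨯₃ (a ⨯₃ b) = 0 := by
    rw [cross_cross_eq_smul_sub_smul', hb, dotProduct_comm a, ha, zero_smul, zero_smul, sub_zero]
  have hprod : w ⬝ᵥ w * (a ⨯₃ b ⬝ᵥ a ⨯₃ b) = 0 := by
    have lagrange := cross_dot_cross w (a ⨯₃ b) w (a ⨯₃ b)
    rwa [hcross, zero_dotProduct, hn, zero_mul, sub_zero, eq_comm] at lagrange
  exact dotProduct_self_eq_zero.1
    ((mul_eq_zero.1 hprod).resolve_right (dotProduct_self_eq_zero.not.2 hab))

section Calculus

variable {𝕜 E : Type*} [NontriviallyNormedField 𝕜] [NormedAddCommGroup E] [NormedSpace 𝕜 E]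
  {n : Type*} [Fintype n] {u : E}

section Det

variable [DecidableEq n] {A : E → Matrix n n 𝕜}

lemma hasFDerivAt_det {A' : n → n → E →L[𝕜] 𝕜}
    (hA : ∀ i j, HasFDerivAt (fun v => A v i j) (A' i j) u) :
    HasFDerivAt (fun v => (A v).det) (∑ i, ∑ j, (A u).adjugate j i • A' i j) u := by
  let detRows : ContinuousMultilinearMap 𝕜 (fun _ : n => n → 𝕜) 𝕜 :=
    { toMultilinearMap := (detRowAlternating (R := 𝕜)).toMultilinearMap
      cont := continuous_id.matrix_det }
  have hrows (i : n) : HasFDerivAt (fun v => A v i) (ContinuousLinearMap.pi (A' i)) u :=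
    hasFDerivAt_pi.2 (hA i)
  refine (HasFDerivAt.multilinear_comp detRows hrows).congr_fderiv ?_
  ext w
  simp only [_root_.sum_apply, _root_.smul_apply, smul_eq_mul]
  refine Finset.sum_congr rfl fun i _ => ?_
  calc ((A u).updateRow i fun j => A' i j w).det
      = ((A u)ᵀ.adjugate *ᵥ fun j => A' i j w) i := by
        rw [← cramer_transpose_apply, cramer_eq_adjugate_mulVec]
    _ = ∑ j, (A u).adjugate j i * A' i j w := by
        simp only [← adjugate_transpose, mulVec, dotProduct, transpose_apply]

lemma differentiableAt_det (hA : ∀ i j, DifferentiableAt 𝕜 (fun v => A v i j) u) :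
    DifferentiableAt 𝕜 (fun v => (A v).det) u :=
  (hasFDerivAt_det fun i j => (hA i j).hasFDerivAt).differentiableAt

lemma fderiv_det_apply_div_det (hA : ∀ i j, DifferentiableAt 𝕜 (fun v => A v i j) u)
    (w : E) :
    fderiv 𝕜 (fun v => (A v).det) u w / (A u).det =
      trace ((A u)⁻¹ * of fun i j => fderiv 𝕜 (fun v => A v i j) u w) := by
  rw [(hasFDerivAt_det fun i j => (hA i j).hasFDerivAt).fderiv, Matrix.inv_def,
    Ring.inverse_eq_inv', smul_mul, trace_smul, smul_eq_mul, div_eq_inv_mul]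
  simp only [_root_.sum_apply, _root_.smul_apply, smul_eq_mul, trace, diag_apply, mul_apply,
    of_apply]
  rw [Finset.sum_comm]

end Det

lemma fderiv_div_apply_div_div {f g : E → 𝕜} (hf : DifferentiableAt 𝕜 f u)
    (hg : DifferentiableAt 𝕜 g u) (hfu : f u ≠ 0) (hgu : g u ≠ 0) (w : E) :
    fderiv 𝕜 (fun v => f v / g v) u w / (f u / g u) =
      fderiv 𝕜 f u w / f u - fderiv 𝕜 g u w / g u := by
  have h : HasFDerivAt (fun v => f v * (g v)⁻¹) _ u :=
    hf.hasFDerivAt.mul ((hasDerivAt_inv hgu).comp_hasFDerivAt u hg.hasFDerivAt)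
  simp only [div_eq_mul_inv (f _), h.fderiv, _root_.add_apply, _root_.smul_apply, smul_eq_mul]
  field_simp
  ring

variable [CompleteSpace 𝕜]

lemma differentiableAt_dotProduct {f g : E → n → 𝕜} (hf : DifferentiableAt 𝕜 f u)
    (hg : DifferentiableAt 𝕜 g u) : DifferentiableAt 𝕜 (fun v => f v ⬝ᵥ g v) u :=
  ((dotProductBilin 𝕜 𝕜 (A := 𝕜) (m := n)).toContinuousBilinearMap.hasFDerivAt_of_bilinear
    hf.hasFDerivAt hg.hasFDerivAt).differentiableAt

lemma fderiv_dotProduct_apply {f g : E → n → 𝕜} (hf : DifferentiableAt 𝕜 f u)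
    (hg : DifferentiableAt 𝕜 g u) (w : E) :
    fderiv 𝕜 (fun v => f v ⬝ᵥ g v) u w =
      fderiv 𝕜 f u w ⬝ᵥ g u + f u ⬝ᵥ fderiv 𝕜 g u w := by
  have h := (dotProductBilin 𝕜 𝕜 (m := n)).toContinuousBilinearMap.fderiv_of_bilinear hf hg
  rw [add_comm]
  exact congrArg (· w) h

lemma differentiableAt_crossProduct {f g : E → Fin 3 → 𝕜} (hf : DifferentiableAt 𝕜 f u)
    (hg : DifferentiableAt 𝕜 g u) : DifferentiableAt 𝕜 (fun v => f v ⨯₃ g v) u :=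
  ((crossProduct (R := 𝕜)).toContinuousBilinearMap.hasFDerivAt_of_bilinear
    hf.hasFDerivAt hg.hasFDerivAt).differentiableAt

end Calculus

section PartialDerivatives

variable {f g : Param → Vec3} {u : Param}

lemma contDiffAt_pd {m n : WithTop ℕ∞} (hf : ContDiffAt ℝ n f u) (hmn : m + 1 ≤ n) (i : Fin 2) :
    ContDiffAt ℝ m (pd i f) u :=
  (hf.fderiv_right hmn).clm_apply contDiffAt_const

lemma differentiableAt_pd (hf : ContDiffAt ℝ 2 f u) (i : Fin 2) :
    DifferentiableAt ℝ (pd i f) u :=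
  (contDiffAt_pd hf one_add_one_eq_two.le i).differentiableAt one_ne_zero

lemma pd_comm (hf : ContDiffAt ℝ 2 f u) (i j : Fin 2) : pd i (pd j f) u = pd j (pd i f) u := by
  have hdiff : DifferentiableAt ℝ (fderiv ℝ f) u :=
    (hf.fderiv_right one_add_one_eq_two.le).differentiableAt one_ne_zero
  have hpd (a b : Fin 2) :
      pd a (pd b f) u = fderiv ℝ (fderiv ℝ f) u (Pi.single a 1) (Pi.single b 1) := by
    change fderiv ℝ (fun v => fderiv ℝ f v (Pi.single b 1)) u (Pi.single a 1) = _
    rw [fderiv_clm_apply hdiff (differentiableAt_const _)]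
    simp
  rw [hpd, hpd]
  exact hf.isSymmSndFDerivAt (by simp) _ _

lemma pds_dotProduct (hf : DifferentiableAt ℝ f u) (hg : DifferentiableAt ℝ g u) (i : Fin 2) :
    pds i (fun v => f v ⬝ᵥ g v) u = pd i f u ⬝ᵥ g u + f u ⬝ᵥ pd i g u :=
  fderiv_dotProduct_apply hf hg _

/-- The entrywise partial derivative `∂_k A` of a matrix-valued function, as a matrix, so that
Jacobi's formula can be stated with a trace. -/
def pdMatrix (k : Fin 2) (A : Param → Matrix (Fin 2) (Fin 2) ℝ) (u : Param) :
    Matrix (Fin 2) (Fin 2) ℝ :=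
  of fun i j => pds k (fun v => A v i j) u

end PartialDerivatives

section Surface

variable {x : Param → Vec3} {u : Param}

lemma fformI_apply (x : Param → Vec3) (u : Param) (i j : Fin 2) :
    fformI x u i j = pd i x u ⬝ᵥ pd j x u := rfl

lemma fformII_apply (x : Param → Vec3) (u : Param) (i j : Fin 2) :
    fformII x u i j = pd i (pd j x) u ⬝ᵥ gaussMap x u := rfl

lemma fformI_isSymm (x : Param → Vec3) (u : Param) : (fformI x u).IsSymm :=
  IsSymm.ext fun i j => dotProduct_comm (pd j x u) (pd i x u)

lemma fformII_isSymm (hx : ContDiffAt ℝ 2 x u) : (fformII x u).IsSymm :=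
  IsSymm.ext fun i j => by rw [fformII_apply, pd_comm hx, fformII_apply]

lemma det_fformI (x : Param → Vec3) (u : Param) :
    (fformI x u).det = pd 0 x u ⨯₃ pd 1 x u ⬝ᵥ pd 0 x u ⨯₃ pd 1 x u := by
  simp only [det_fin_two, fformI_apply, cross_dot_cross]

lemma det_fformI_ne_zero (hreg : LinearIndependent ℝ ![pd 0 x u, pd 1 x u]) :
    (fformI x u).det ≠ 0 := by
  rw [det_fformI]
  exact dotProduct_self_eq_zero.not.2 (crossProduct_ne_zero_iff_linearIndependent.2 hreg)

section GaussMap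

lemma pd_dotProduct_gaussMap (x : Param → Vec3) (u : Param) (i : Fin 2) :
    pd i x u ⬝ᵥ gaussMap x u = 0 := by
  rw [gaussMap, dotProduct_smul]
  fin_cases i
  · exact (congrArg _ (dot_self_cross _ _)).trans (smul_zero _)
  · exact (congrArg _ (dot_cross_self _ _)).trans (smul_zero _)

lemma norm3_ne_zero {a : Vec3} (ha : a ≠ 0) : norm3 a ≠ 0 :=
  (Real.sqrt_pos.2 (dotProduct_self_star_pos_iff.2 ha)).ne'

lemma normalize_dotProduct_self {a : Vec3} (ha : a ≠ 0) :
    ((norm3 a)⁻¹ • a) ⬝ᵥ ((norm3 a)⁻¹ • a) = 1 := by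
  have hsq : norm3 a * norm3 a = a ⬝ᵥ a := Real.mul_self_sqrt (dotProduct_self_star_nonneg a)
  have hne := norm3_ne_zero ha
  rw [smul_dotProduct, dotProduct_smul, ← hsq, smul_eq_mul, smul_eq_mul]
  field_simp

lemma differentiableAt_cross_pd (hx : ContDiffAt ℝ 2 x u) :
    DifferentiableAt ℝ (fun v => pd 0 x v ⨯₃ pd 1 x v) u :=
  differentiableAt_crossProduct (differentiableAt_pd hx 0) (differentiableAt_pd hx 1)

lemma differentiableAt_gaussMap (hx : ContDiffAt ℝ 2 x u)
    (hreg : LinearIndependent ℝ ![pd 0 x u, pd 1 x u]) : DifferentiableAt ℝ (gaussMap x) u := by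
  have hcross := differentiableAt_cross_pd hx
  have hne := crossProduct_ne_zero_iff_linearIndependent.2 hreg
  have hnorm : DifferentiableAt ℝ (fun v => norm3 (pd 0 x v ⨯₃ pd 1 x v)) u :=
    (differentiableAt_dotProduct hcross hcross).sqrt (dotProduct_self_eq_zero.not.2 hne)
  exact (hnorm.inv (norm3_ne_zero hne)).smul hcross

lemma eventually_gaussMap_dotProduct_self (hx : ContDiffAt ℝ 2 x u)
    (hreg : LinearIndependent ℝ ![pd 0 x u, pd 1 x u]) :
    ∀ᶠ v in nhds u, gaussMap x v ⬝ᵥ gaussMap x v = 1 := by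
  have hne := crossProduct_ne_zero_iff_linearIndependent.2 hreg
  filter_upwards [(differentiableAt_cross_pd hx).continuousAt.eventually_ne hne] with v hv
  exact normalize_dotProduct_self hv

lemma pd_gaussMap_dotProduct_gaussMap (hx : ContDiffAt ℝ 2 x u)
    (hreg : LinearIndependent ℝ ![pd 0 x u, pd 1 x u]) (i : Fin 2) :
    pd i (gaussMap x) u ⬝ᵥ gaussMap x u = 0 := by
  have hn := differentiableAt_gaussMap hx hreg
  have hconst : pds i (fun v => gaussMap x v ⬝ᵥ gaussMap x v) u = 0 := by
    have hone : (fun v => gaussMap x v ⬝ᵥ gaussMap x v) =ᶠ[nhds u] fun _ => 1 :=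
      eventually_gaussMap_dotProduct_self hx hreg
    rw [pds, hone.fderiv_eq, fderiv_fun_const, Pi.zero_apply, _root_.zero_apply]
  rw [pds_dotProduct hn hn, dotProduct_comm (gaussMap x u)] at hconst
  linarith

lemma weingarten_formula (hx : ContDiffAt ℝ 2 x u)
    (hreg : LinearIndependent ℝ ![pd 0 x u, pd 1 x u]) (i j : Fin 2) :
    pd j x u ⬝ᵥ pd i (gaussMap x) u = -fformII x u i j := by
  have hconst : pds i (fun v => pd j x v ⬝ᵥ gaussMap x v) u = 0 := by
    simp only [pds, pd_dotProduct_gaussMap, fderiv_fun_const, Pi.zero_apply, _root_.zero_apply]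
  rw [pds_dotProduct (differentiableAt_pd hx j) (differentiableAt_gaussMap hx hreg),
    ← fformII_apply] at hconst
  linarith

end GaussMap

section Christoffel

lemma pds_fformI (hx : ContDiffAt ℝ 2 x u) (k i j : Fin 2) :
    pds k (fun v => fformI x v i j) u =
      pd k (pd i x) u ⬝ᵥ pd j x u + pd i x u ⬝ᵥ pd k (pd j x) u :=
  pds_dotProduct (differentiableAt_pd hx i) (differentiableAt_pd hx j) k

lemma christoffelI_eq_inv_mulVec (hx : ContDiffAt ℝ 2 x u) (i j m : Fin 2) :
    christoffelI x u i j m =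
      ((fformI x u)⁻¹ *ᵥ fun l => pd i (pd j x) u ⬝ᵥ pd l x u) m := by
  rw [christoffelI, mulVec, dotProduct, Finset.mul_sum]
  refine Finset.sum_congr rfl fun l _ => ?_
  simp only [pds_fformI hx, pd_comm hx l, pd_comm hx j i, dotProduct_comm (pd i x u),
    dotProduct_comm (pd j x u)]
  ring

lemma christoffelI_comm (hx : ContDiffAt ℝ 2 x u) (i j m : Fin 2) :
    christoffelI x u i j m = christoffelI x u j i m := by
  simp only [christoffelI_eq_inv_mulVec hx, pd_comm hx i j]

lemma sum_christoffelI_mul_fformI (hx : ContDiffAt ℝ 2 x u)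
    (hreg : LinearIndependent ℝ ![pd 0 x u, pd 1 x u]) (i j l : Fin 2) :
    ∑ m, christoffelI x u i j m * fformI x u m l = pd i (pd j x) u ⬝ᵥ pd l x u := by
  have hsolve : fformI x u *ᵥ christoffelI x u i j = fun l => pd i (pd j x) u ⬝ᵥ pd l x u := by
    rw [funext (christoffelI_eq_inv_mulVec hx i j), mulVec_mulVec,
      mul_nonsing_inv _ (det_fformI_ne_zero hreg).isUnit, one_mulVec]
  refine Eq.trans ?_ (congrFun hsolve l)
  simp only [mulVec, dotProduct, mul_comm (christoffelI _ _ _ _ _), (fformI_isSymm x u).apply l]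

lemma gauss_formula (hx : ContDiffAt ℝ 2 x u)
    (hreg : LinearIndependent ℝ ![pd 0 x u, pd 1 x u]) (i j : Fin 2) :
    pd i (pd j x) u =
      ∑ m, christoffelI x u i j m • pd m x u + fformII x u i j • gaussMap x u := by
  have hne := crossProduct_ne_zero_iff_linearIndependent.2 hreg
  have hunit : gaussMap x u ⬝ᵥ gaussMap x u = 1 :=
    (eventually_gaussMap_dotProduct_self hx hreg).self_of_nhds
  rw [← sub_eq_zero]
  set w := pd i (pd j x) u -
    (∑ m, christoffelI x u i j m • pd m x u + fformII x u i j • gaussMap x u) with hw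
  have htangent (l : Fin 2) : w ⬝ᵥ pd l x u = 0 := by
    rw [hw, sub_dotProduct, add_dotProduct, sum_dotProduct,
      ← sum_christoffelI_mul_fformI hx hreg]
    simp only [smul_dotProduct, dotProduct_comm (gaussMap x u), pd_dotProduct_gaussMap,
      fformI_apply, smul_eq_mul, mul_zero, add_zero, sub_self]
  have hnormal : w ⬝ᵥ gaussMap x u = 0 := by
    rw [hw, sub_dotProduct, add_dotProduct, sum_dotProduct, ← fformII_apply]
    simp only [smul_dotProduct, pd_dotProduct_gaussMap, hunit, smul_eq_mul, mul_zero, mul_one,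
      Finset.sum_const_zero, zero_add, sub_self]
  rw [gaussMap, dotProduct_smul, smul_eq_mul] at hnormal
  exact eq_zero_of_orthogonal_cross hne (htangent 0) (htangent 1)
    ((mul_eq_zero.1 hnormal).resolve_left (inv_ne_zero (norm3_ne_zero hne)))

end Christoffel

section Codazzi

lemma contDiffAt_two_pd (hx : ContDiffAt ℝ 3 x u) (i : Fin 2) : ContDiffAt ℝ 2 (pd i x) u :=
  contDiffAt_pd hx two_add_one_eq_three.le i

lemma differentiableAt_fformII (hx : ContDiffAt ℝ 3 x u)
    (hreg : LinearIndependent ℝ ![pd 0 x u, pd 1 x u]) (i j : Fin 2) :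
    DifferentiableAt ℝ (fun v => fformII x v i j) u :=
  differentiableAt_dotProduct (differentiableAt_pd (contDiffAt_two_pd hx j) i)
    (differentiableAt_gaussMap (hx.of_le (by norm_num)) hreg)

lemma pds_fformII (hx : ContDiffAt ℝ 3 x u)
    (hreg : LinearIndependent ℝ ![pd 0 x u, pd 1 x u]) (i k j : Fin 2) :
    pds i (fun v => fformII x v k j) u =
      pd i (pd k (pd j x)) u ⬝ᵥ gaussMap x u -
        ∑ m, christoffelI x u k j m * fformII x u i m := by
  have hx2 : ContDiffAt ℝ 2 x u := hx.of_le (by norm_num)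
  calc pds i (fun v => fformII x v k j) u
      = pd i (pd k (pd j x)) u ⬝ᵥ gaussMap x u + pd k (pd j x) u ⬝ᵥ pd i (gaussMap x) u :=
        pds_dotProduct (differentiableAt_pd (contDiffAt_two_pd hx j) k)
          (differentiableAt_gaussMap hx2 hreg) i
    _ = _ := by
        rw [gauss_formula hx2 hreg k j, add_dotProduct, sum_dotProduct]
        simp only [smul_dotProduct, weingarten_formula hx2 hreg,
          dotProduct_comm (gaussMap x u), pd_gaussMap_dotProduct_gaussMap hx2 hreg, smul_eq_mul,
          mul_neg, mul_zero, add_zero, Finset.sum_neg_distrib, sub_eq_add_neg]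

lemma codazzi_equation (hx : ContDiffAt ℝ 3 x u)
    (hreg : LinearIndependent ℝ ![pd 0 x u, pd 1 x u]) (i k j : Fin 2) :
    covDerivII x i k j u = covDerivII x k i j u := by
  have hx2 : ContDiffAt ℝ 2 x u := hx.of_le (by norm_num)
  simp only [covDerivII, pds_fformII hx hreg, pd_comm (contDiffAt_two_pd hx j) i k,
    christoffelI_comm hx2 i k]
  ring

end Codazzi

section LogarithmicDerivative

/-- The connection matrix `Γ_k = (Γ_{ki}^m)_{im}`, with the lower index `i` as row index; it turns
the covariant derivative of a 2-tensor into matrix products. -/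
def connectionMatrix (x : Param → Vec3) (u : Param) (k : Fin 2) : Matrix (Fin 2) (Fin 2) ℝ :=
  of fun i m => christoffelI x u k i m

lemma of_covDerivII (x : Param → Vec3) (u : Param) (k : Fin 2) :
    (of fun i j => covDerivII x k i j u) = pdMatrix k (fformII x) u -
      (connectionMatrix x u k * fformII x u + fformII x u * (connectionMatrix x u k)ᵀ) := by
  ext i j
  simp only [covDerivII, pdMatrix, connectionMatrix, of_apply, Matrix.sub_apply, Matrix.add_apply,
    mul_apply, transpose_apply, mul_comm (fformII x u i _), sub_sub]

lemma pdMatrix_fformI (hx : ContDiffAt ℝ 2 x u)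
    (hreg : LinearIndependent ℝ ![pd 0 x u, pd 1 x u]) (k : Fin 2) :
    pdMatrix k (fformI x) u =
      connectionMatrix x u k * fformI x u + fformI x u * (connectionMatrix x u k)ᵀ := by
  ext i j
  have hright : ∑ m, fformI x u i m * christoffelI x u k j m = pd k (pd j x) u ⬝ᵥ pd i x u := by
    simp only [← sum_christoffelI_mul_fformI hx hreg, mul_comm (christoffelI _ _ _ _ _),
      (fformI_isSymm x u).apply i]
  simp only [pdMatrix, connectionMatrix, of_apply, Matrix.add_apply, mul_apply, transpose_apply,
    sum_christoffelI_mul_fformI hx hreg, hright, pds_fformI hx, dotProduct_comm (pd i x u)]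

lemma pds_gaussCurv_div_gaussCurv (hx : ContDiffAt ℝ 3 x u)
    (hreg : LinearIndependent ℝ ![pd 0 x u, pd 1 x u]) (hpar : (fformII x u).det ≠ 0)
    (k : Fin 2) :
    pds k (gaussCurv x) u / gaussCurv x u =
      trace ((fformII x u)⁻¹ * pdMatrix k (fformII x) u) -
        trace ((fformI x u)⁻¹ * pdMatrix k (fformI x) u) := by
  have hx2 : ContDiffAt ℝ 2 x u := hx.of_le (by norm_num)
  have hI (i j : Fin 2) : DifferentiableAt ℝ (fun v => fformI x v i j) u :=
    differentiableAt_dotProduct (differentiableAt_pd hx2 i) (differentiableAt_pd hx2 j)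
  have hII := differentiableAt_fformII hx hreg
  calc pds k (gaussCurv x) u / gaussCurv x u
      = pds k (fun v => (fformII x v).det) u / (fformII x u).det -
          pds k (fun v => (fformI x v).det) u / (fformI x u).det :=
        fderiv_div_apply_div_div (differentiableAt_det hII) (differentiableAt_det hI) hpar
          (det_fformI_ne_zero hreg) _
    _ = _ := congrArg₂ _ (fderiv_det_apply_div_det hII _) (fderiv_det_apply_div_det hI _)

lemma trace_inv_fformII_mul_covDerivII (hx : ContDiffAt ℝ 3 x u)
    (hreg : LinearIndependent ℝ ![pd 0 x u, pd 1 x u]) (hpar : (fformII x u).det ≠ 0)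
    (k : Fin 2) :
    trace ((fformII x u)⁻¹ * of fun i j => covDerivII x k i j u) =
      pds k (gaussCurv x) u / gaussCurv x u := by
  rw [of_covDerivII, mul_sub, trace_sub,
    trace_inv_mul_mul_add_mul_transpose hpar.isUnit, pds_gaussCurv_div_gaussCurv hx hreg hpar,
    pdMatrix_fformI (hx.of_le (by norm_num)) hreg,
    trace_inv_mul_mul_add_mul_transpose (det_fformI_ne_zero hreg).isUnit]

end LogarithmicDerivative

end Surface

theorem stmt2_general {x : Param → Vec3} {u : Param} (hx : ContDiffAt ℝ 3 x u)
    (hreg : LinearIndependent ℝ ![pd 0 x u, pd 1 x u]) (hpar : (fformII x u).det ≠ 0)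
    (k : Fin 2) :
    pds k (gaussCurv x) u / gaussCurv x u =
      ∑ i, ∑ j, (fformII x u)⁻¹ i j * covDerivII x i k j u := by
  have hsymm : (fformII x u).IsSymm := fformII_isSymm (hx.of_le (by norm_num))
  simp only [codazzi_equation hx hreg _ k]
  rw [← trace_inv_fformII_mul_covDerivII hx hreg hpar k, ← sum_sum_inv_mul_eq_trace hsymm]
  simp only [of_apply]

/-- `K_{/k}/K = b^{ij} ∇^I_i b_{kj}` on `U`. -/
theorem stmt2 (U : Set Param) (x : Param → Vec3)
    (hU : IsOpen U) (hUconn : IsConnected U)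
    (hx : ContDiffOn ℝ (⊤ : ℕ∞) x U) (himm : Immersed x U)
    (hpar : ∀ u ∈ U, (fformII x u).det ≠ 0) :
    ∀ u ∈ U, ∀ k : Fin 2,
      pds k (gaussCurv x) u / gaussCurv x u =
        ∑ i, ∑ j, (fformII x u)⁻¹ i j * covDerivII x i k j u := by
  intro u hu k
  have hx3 : ContDiffAt ℝ 3 x u := contDiffAt_infty.1 (hx.contDiffAt (hU.mem_nhds hu)) 3
  exact stmt2_general hx3 (himm u hu) (hpar u hu) k
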